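/- Let A be a real m × n matrix and b ∈ ℝ^m with {x : Ax = b} nonempty. Then there exists δ̄ > 0 such that for all δ with 0 < δ < δ̄, the unique minimizer of ‖x‖₁ + (δ/2)‖x‖² over {x : Ax = b} is the minimizer of ‖x‖ (Euclidean norm) over the set of all minimizers of ‖x‖₁ over {x : Ax = b}; i.e., the regularized problem selects the least ℓ₂-norm solution of Basis Pursuit. -/

import Mathlib

open Matrix Finset

/-- Minimizers of the regularized problem. -/
def RegMin {m n : ℕ} (A : Matrix (Fin m) (Fin n) ℝ) (b : Fin m → ℝ) (δ : ℝ)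
    (xs : Fin n → ℝ) : Prop :=
  A.mulVec xs = b ∧ ∀ x : Fin n → ℝ, A.mulVec x = b →
    (∑ i, |xs i|) + (δ / 2) * (∑ i, (xs i) ^ 2) ≤ (∑ i, |x i|) + (δ / 2) * (∑ i, (x i) ^ 2)

lemma abs_eq_sign_mul (x : ℝ) : |x| = (SignType.sign x : ℝ) * x := by
  rcases lt_trichotomy x 0 with h | h | h
  · simp [sign_neg h, abs_of_neg h]
  · simp [h]
  · simp [sign_pos h, abs_of_pos h]

lemma abs_add_eventually (x d : ℝ) (h : SignType.sign x = 0 → d = 0) :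
    ∀ᶠ t in nhdsWithin (0 : ℝ) (Set.Ioi 0),
      |x + t * d| = |x| + t * ((SignType.sign x : ℝ) * d) := by
  have hc : Filter.Tendsto (fun t : ℝ => x + t * d) (nhdsWithin (0 : ℝ) (Set.Ioi 0)) (nhds x) := by
    have : Continuous (fun t : ℝ => x + t * d) := by fun_prop
    have h2 := this.tendsto 0
    simp only [zero_mul, add_zero] at h2
    exact h2.mono_left nhdsWithin_le_nhds
  rcases lt_trichotomy x 0 with hx | hx | hx
  · filter_upwards [hc.eventually (gt_mem_nhds hx)] with t ht
    rw [abs_of_neg ht, abs_of_neg hx, sign_neg hx]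
    simp; ring
  · have : d = 0 := h (by simp [hx])
    simp [this]
  · filter_upwards [hc.eventually (lt_mem_nhds hx)] with t ht
    rw [abs_of_pos ht, abs_of_pos hx, sign_pos hx]
    simp

/-- First order condition in directions preserving the zero pattern. -/
lemma first_order {m n : ℕ} (A : Matrix (Fin m) (Fin n) ℝ) (b : Fin m → ℝ) (δ : ℝ)
    (x d : Fin n → ℝ) (hx : RegMin A b δ x) (hd : A.mulVec d = 0)
    (h0 : ∀ i, SignType.sign (x i) = 0 → d i = 0) :
    0 ≤ (∑ i, (SignType.sign (x i) : ℝ) * d i) + δ * ∑ i, x i * d i := by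
  set c := ∑ i, (SignType.sign (x i) : ℝ) * d i with hcdef
  set p := ∑ i, x i * d i with hp
  set q := ∑ i, (d i) ^ 2 with hq
  have hev : ∀ᶠ t in nhdsWithin (0 : ℝ) (Set.Ioi 0), 0 ≤ c + δ * p + (δ / 2) * q * t := by
    have h1 : ∀ᶠ t in nhdsWithin (0 : ℝ) (Set.Ioi 0), ∀ i,
        |x i + t * d i| = |x i| + t * ((SignType.sign (x i) : ℝ) * d i) :=
      Filter.eventually_all.2 fun i => abs_add_eventually _ _ (h0 i)
    filter_upwards [h1, self_mem_nhdsWithin] with t ht htpos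
    have htpos : 0 < t := htpos
    have hm := hx.2 (x + t • d) (by
      rw [Matrix.mulVec_add, Matrix.mulVec_smul, hd, hx.1]; simp)
    have e1 : ∑ i, |(x + t • d) i| = (∑ i, |x i|) + t * c := by
      simp only [Pi.add_apply, Pi.smul_apply, smul_eq_mul, ht]
      rw [Finset.sum_add_distrib, hcdef, Finset.mul_sum]
    have e2 : ∑ i, ((x + t • d) i) ^ 2 = (∑ i, (x i) ^ 2) + 2 * t * p + t ^ 2 * q := by
      rw [hp, hq, Finset.mul_sum, Finset.mul_sum, ← Finset.sum_add_distrib,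
        ← Finset.sum_add_distrib]
      refine Finset.sum_congr rfl fun i _ => ?_
      simp only [Pi.add_apply, Pi.smul_apply, smul_eq_mul]
      ring
    rw [e1, e2] at hm
    have : 0 ≤ t * (c + δ * p + (δ / 2) * q * t) := by nlinarith
    exact nonneg_of_mul_nonneg_right this htpos
  have hc : Filter.Tendsto (fun t : ℝ => c + δ * p + (δ / 2) * q * t)
      (nhdsWithin (0 : ℝ) (Set.Ioi 0)) (nhds (c + δ * p)) := by
    have : Continuous (fun t : ℝ => c + δ * p + (δ / 2) * q * t) := by fun_prop
    have h2 := this.tendsto 0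
    simp only [mul_zero, add_zero] at h2
    exact h2.mono_left nhdsWithin_le_nhds
  exact ge_of_tendsto hc hev

/-- Exact regularization for minimizers with a fixed sign pattern. -/
lemma pattern {m n : ℕ} (A : Matrix (Fin m) (Fin n) ℝ) (b : Fin m → ℝ)
    (hfeas : ∃ x : Fin n → ℝ, A.mulVec x = b) (σ : Fin n → SignType) :
    ∃ ε : ℝ, 0 < ε ∧ ∀ δ, 0 < δ → δ < ε → ∀ x : Fin n → ℝ,
      (∀ i, SignType.sign (x i) = σ i) → RegMin A b δ x →
      ∀ y : Fin n → ℝ, A.mulVec y = b → (∑ i, |x i|) ≤ ∑ i, |y i| := by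
  by_cases hV : ∃ d : Fin n → ℝ, A.mulVec d = 0 ∧ (∀ i, σ i = 0 → d i = 0) ∧
      (∑ i, (σ i : ℝ) * d i) < 0
  · obtain ⟨d, hd, hs, hneg⟩ := hV
    obtain ⟨x0, hx0⟩ := hfeas
    set κ := -∑ i, (σ i : ℝ) * d i with hκ
    have hκpos : 0 < κ := by linarith
    set C := (∑ i, |x0 i|) + (∑ i, (x0 i) ^ 2) with hC
    set D := ∑ i, C * |d i| with hD
    have hq0 : 0 ≤ ∑ i, (x0 i) ^ 2 := Finset.sum_nonneg fun i _ => sq_nonneg _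
    have hf0 : 0 ≤ ∑ i, |x0 i| := Finset.sum_nonneg fun i _ => abs_nonneg _
    have hD0 : 0 ≤ D := Finset.sum_nonneg fun i _ => mul_nonneg (by linarith) (abs_nonneg _)
    refine ⟨min 1 (κ / (D + 1)), lt_min one_pos (by positivity), ?_⟩
    intro δ hδ hδε x hxs hx
    exfalso
    have hδ1 : δ < 1 := lt_of_lt_of_le hδε (min_le_left _ _)
    have hδ2 : δ < κ / (D + 1) := lt_of_lt_of_le hδε (min_le_right _ _)
    rw [lt_div_iff₀ (by linarith)] at hδ2
    have hfo := first_order A b δ x d hx hd (fun i hi => hs i (by rw [← hxs i]; exact hi))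
    simp only [hxs] at hfo
    have hb := hx.2 x0 hx0
    have hqx : 0 ≤ ∑ i, (x i) ^ 2 := Finset.sum_nonneg fun i _ => sq_nonneg _
    have hxC : ∑ i, |x i| ≤ C := by
      nlinarith [mul_nonneg hδ.le hqx, mul_nonneg (sub_nonneg.2 hδ1.le) hq0]
    have hxd : ∑ i, x i * d i ≤ D := by
      refine Finset.sum_le_sum fun i _ => ?_
      have h1 : |x i| ≤ C :=
        (Finset.single_le_sum (f := fun i => |x i|) (fun i _ => abs_nonneg _)
          (Finset.mem_univ i)).trans hxC
      calc x i * d i ≤ |x i * d i| := le_abs_self _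
        _ = |x i| * |d i| := abs_mul _ _
        _ ≤ C * |d i| := mul_le_mul_of_nonneg_right h1 (abs_nonneg _)
    have := mul_le_mul_of_nonneg_left hxd hδ.le
    linarith
  · push Not at hV
    by_cases hbad : ∃ x1 : Fin n → ℝ, (∀ i, SignType.sign (x1 i) = σ i) ∧ A.mulVec x1 = b ∧
        ∃ y : Fin n → ℝ, A.mulVec y = b ∧ ∑ i, |y i| < ∑ i, |x1 i|
    · obtain ⟨x1, hx1s, hx1, y, hy, hlt⟩ := hbad
      have hq : 0 ≤ ∑ i, (y i) ^ 2 := Finset.sum_nonneg fun i _ => sq_nonneg _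
      set q := ∑ i, (y i) ^ 2
      refine ⟨((∑ i, |x1 i|) - ∑ i, |y i|) / (q + 1), div_pos (by linarith) (by linarith), ?_⟩
      intro δ hδ hδε x hxs hx
      exfalso
      rw [lt_div_iff₀ (by linarith)] at hδε
      have hz : ∀ u v : Fin n → ℝ, (∀ i, SignType.sign (u i) = σ i) →
          (∀ i, SignType.sign (v i) = σ i) → A.mulVec u = b → A.mulVec v = b →
          ∑ i, |v i| ≤ ∑ i, |u i| := by
        intro u v hu hv hau hav
        have := hV (u - v) (by rw [Matrix.mulVec_sub, hau, hav, sub_self]) (fun i hi => by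
          have h1 : u i = 0 := sign_eq_zero_iff.1 ((hu i).trans hi)
          have h2 : v i = 0 := sign_eq_zero_iff.1 ((hv i).trans hi)
          simp [h1, h2])
        simp only [Pi.sub_apply, mul_sub, Finset.sum_sub_distrib] at this
        simp only [abs_eq_sign_mul, hu, hv]
        linarith
      have h1 := hz x x1 hxs hx1s hx.1 hx1
      have h2 := hx.2 y hy
      have hqx : 0 ≤ ∑ i, (x i) ^ 2 := Finset.sum_nonneg fun i _ => sq_nonneg _
      nlinarith [mul_nonneg hδ.le hqx, mul_nonneg hδ.le hq]
    · push Not at hbad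
      exact ⟨1, one_pos, fun δ _ _ x hxs hx y hy => hbad x hxs hx.1 y hy⟩

/-- Exact regularization selects the least `ℓ²`-norm solution of Basis Pursuit: there is
`δ̄ > 0` such that for every `0 < δ < δ̄`, any minimizer of `‖x‖₁ + (δ/2)‖x‖²` over
`{x : A x = b}` minimizes `‖x‖₁` over `{x : A x = b}` and has the least Euclidean norm
among all minimizers of `‖x‖₁` over `{x : A x = b}`. -/
theorem basisPursuit_regularization_selects_least_l2 {m n : ℕ} (A : Matrix (Fin m) (Fin n) ℝ)
    (b : Fin m → ℝ) (hfeas : ∃ x : Fin n → ℝ, A.mulVec x = b) :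
    ∃ δbar : ℝ, 0 < δbar ∧ ∀ δ : ℝ, 0 < δ → δ < δbar →
      ∀ xstar : Fin n → ℝ,
        (A.mulVec xstar = b ∧
          ∀ x : Fin n → ℝ, A.mulVec x = b →
            (∑ i, |xstar i|) + (δ / 2) * (∑ i, (xstar i) ^ 2)
              ≤ (∑ i, |x i|) + (δ / 2) * (∑ i, (x i) ^ 2)) →
        ((A.mulVec xstar = b ∧
            ∀ x : Fin n → ℝ, A.mulVec x = b → (∑ i, |xstar i|) ≤ ∑ i, |x i|) ∧
          ∀ z : Fin n → ℝ,
            (A.mulVec z = b ∧ ∀ x : Fin n → ℝ, A.mulVec x = b → (∑ i, |z i|) ≤ ∑ i, |x i|) →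
            Real.sqrt (∑ i, (xstar i) ^ 2) ≤ Real.sqrt (∑ i, (z i) ^ 2)) := by

  choose ε hε hP using pattern A b hfeas
  refine ⟨Finset.univ.inf' Finset.univ_nonempty ε, ?_, ?_⟩
  · rw [Finset.lt_inf'_iff]
    exact fun σ _ => hε σ
  intro δ hδ hδε xs hxs
  have hmin := hP (fun i => SignType.sign (xs i)) δ hδ
    (lt_of_lt_of_le hδε (Finset.inf'_le _ (Finset.mem_univ _))) xs (fun _ => rfl) hxs
  refine ⟨⟨hxs.1, hmin⟩, fun z hz => Real.sqrt_le_sqrt ?_⟩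
  have h1 := hxs.2 z hz.1
  have h2 := hz.2 xs hxs.1
  have h3 : (δ / 2) * (∑ i, (xs i) ^ 2) ≤ (δ / 2) * ∑ i, (z i) ^ 2 := by linarith
  exact le_of_mul_le_mul_left h3 (by linarith)
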